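/- arXiv:2403.06043 — 2 statements merged into one kernel-verified Lean document; each statement's English description precedes it below -/
import Mathlib

section
/- Let 0 < p < 1 and β > 0. Let C_0 = {ω ∈ C([0,1], ℝ) : ω(0) = 0} be equipped with the supremum norm. Define J : C_0 → [0, ∞] by J(ω) = (β²/2)·∫_0^1 |ω(u)|^{−2p} du + (β/(1−p))·|ω(1)|^{1−p} when ∫_0^1 |ω(u)|^{−2p} du < ∞, and J(ω) = ∞ otherwise (with the convention |0|^{−2p} = ∞ in the integrand). Then J is lower semicontinuous on C_0. -/
open MeasureTheory Set ENNReal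

/-! Since `t ↦ t ^ r` is continuous from `[0, ∞]` to itself for every real `r`, even at `t = 0` with
`0 ^ r = ∞` when `r < 0`, the integrand depends continuously on `ω` at each fixed point, whether or
not `ω` vanishes there. Fatou's lemma, applied along neighbourhood filters, turns this into lower
semicontinuity of the integral. -/

theorem lowerSemicontinuous_lintegral {Y α : Type*} [TopologicalSpace Y]
    [FirstCountableTopology Y] [MeasurableSpace α] {μ : Measure α} {f : Y → α → ℝ≥0∞}
    (hmeas : ∀ y, AEMeasurable (f y) μ)
    (hlsc : ∀ᵐ a ∂μ, LowerSemicontinuous fun y => f y a) :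
    LowerSemicontinuous fun y => ∫⁻ a, f y a ∂μ := by
  refine lowerSemicontinuous_iff_le_liminf.2 fun y₀ => ?_
  calc
    ∫⁻ a, f y₀ a ∂μ ≤ ∫⁻ a, Filter.liminf (fun y => f y a) (nhds y₀) ∂μ :=
      lintegral_mono_ae <| hlsc.mono fun _ ha => lowerSemicontinuous_iff_le_liminf.1 ha y₀
    _ ≤ Filter.liminf (fun y => ∫⁻ a, f y a ∂μ) (nhds y₀) := lintegral_liminf_le' hmeas

theorem ofReal_mul_norm_rpow {E : Type*} [SeminormedAddGroup E] {c q : ℝ} (hc : 0 ≤ c)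
    (hq : 0 ≤ q) (v : E) : ENNReal.ofReal (c * ‖v‖ ^ q) = ENNReal.ofReal c * ‖v‖ₑ ^ q := by
  rw [ofReal_mul hc, ← ofReal_rpow_of_nonneg (norm_nonneg v) hq, ofReal_norm]

section ContinuousMap

variable {X E : Type*} [TopologicalSpace X] [SeminormedAddCommGroup E]

theorem continuous_enorm_eval_rpow (x : X) (r : ℝ) :
    Continuous fun ω : C(X, E) => ‖ω x‖ₑ ^ r :=
  continuous_rpow_const.comp (continuous_eval_const x).enorm

variable [WeaklyLocallyCompactSpace X] [SigmaCompactSpace X]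
  [MeasurableSpace X] [OpensMeasurableSpace X]

theorem lowerSemicontinuous_lintegral_enorm_rpow (μ : Measure X) (r : ℝ) :
    LowerSemicontinuous fun ω : C(X, E) => ∫⁻ u, ‖ω u‖ₑ ^ r ∂μ :=
  lowerSemicontinuous_lintegral
    (fun ω => (continuous_rpow_const.comp ω.continuous.enorm).aemeasurable)
    (.of_forall fun u => (continuous_enorm_eval_rpow u r).lowerSemicontinuous)

theorem stmt6_general (μ : Measure X) (x : X) (a b : NNReal) (r q : ℝ) :
    LowerSemicontinuous fun ω : C(X, E) => a * ∫⁻ u, ‖ω u‖ₑ ^ r ∂μ + b * ‖ω x‖ₑ ^ q := by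
  refine LowerSemicontinuous.add ?_ (Continuous.lowerSemicontinuous ?_)
  · exact (ENNReal.continuous_const_mul coe_ne_top).comp_lowerSemicontinuous
      (lowerSemicontinuous_lintegral_enorm_rpow μ r) mul_right_mono
  · exact (ENNReal.continuous_const_mul coe_ne_top).comp (continuous_enorm_eval_rpow x q)

end ContinuousMap

/-- The functional `J(ω) = (β²/2)∫_0^1 |ω(u)|^{-2p} du + (β/(1-p))|ω(1)|^{1-p}`
(with the convention `|0|^{-2p} = ∞`, so `J(ω) = ∞` when the integral diverges)
is lower semicontinuous on `C_0 = {ω ∈ C([0,1],ℝ) : ω(0) = 0}` with the topology of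
uniform convergence. -/
theorem stmt6 (p β : ℝ) (hp0 : 0 < p) (hp1 : p < 1) (hβ : 0 < β) :
    LowerSemicontinuous
      (fun ω : {ω : C(Set.Icc (0:ℝ) 1, ℝ) // ω ⟨0, by norm_num⟩ = 0} =>
        ENNReal.ofReal (β ^ 2 / 2) *
            (∫⁻ u : Set.Icc (0:ℝ) 1, (ENNReal.ofReal |ω.1 u|) ^ (-2 * p)) +
          ENNReal.ofReal ((β / (1 - p)) * |ω.1 ⟨1, by norm_num⟩| ^ (1 - p))) := by
  have hc : 0 ≤ β / (1 - p) := div_nonneg hβ.le (sub_nonneg.2 hp1.le)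
  simp only [← Real.norm_eq_abs, ofReal_mul_norm_rpow hc (sub_nonneg.2 hp1.le), ofReal_norm]
  exact (stmt6_general volume _ _ _ _ _).comp continuous_subtype_val
end

section
/- Let 0 < x1 < x2 and y1 < y2 < 0. For γ ∈ ℝ define the linear functions b̃_X(x) = ((γ − y1)/(x2 − x1))·(x − x1) + y1 and b̃_Y(x) = ((y2 − y1)/(x2 − x1))·(x − x1) + y1. Then there exists γ0 > 0 such that for all γ ≥ γ0 and all x ∈ [x1, x2], b̃_X(x)² − b̃_Y(x)² + (b̃_X′ − b̃_Y′) ≥ 0, where b̃_X′ − b̃_Y′ = (γ − y2)/(x2 − x1) is the (constant) difference of slopes. (That is, for γ sufficiently large, b̃_X² − b̃_Y² + (γ − y2)/(x2 − x1) is nonnegative on [x1, x2].) -/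
open Set

/-!
On `[x₁, x₂]` the line through `(x₁, y₁)` and `(x₂, y₂)` takes values between `y₁` and `y₂`, so its
square is at most `M = max (y₁ ^ 2) (y₂ ^ 2)`, independently of `γ`. The slope difference
`(γ - y₂) / (x₂ - x₁)` is at least `M` once `γ ≥ y₂ + M * (x₂ - x₁)`, and the square of the other
line only helps.
-/

section OrderedField

variable {K : Type*} [Field K]

/-- The line through `(x₁, y₁)` and `(x₂, y₂)`, as a function of `x`. It stands for both `b̃_X`
(with `y₂ = γ`) and `b̃_Y`. For `x₁ = x₂`, division by zero makes it the constant `y₁`. -/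
def chord (x₁ x₂ y₁ y₂ x : K) : K :=
  (y₂ - y₁) / (x₂ - x₁) * (x - x₁) + y₁

lemma chord_eq_lineMap (x₁ x₂ y₁ y₂ x : K) :
    chord x₁ x₂ y₁ y₂ x = AffineMap.lineMap y₁ y₂ ((x - x₁) / (x₂ - x₁)) := by
  rw [chord, AffineMap.lineMap_apply_ring']
  ring

variable [LinearOrder K] [IsStrictOrderedRing K]

lemma chord_mem_segment {x₁ x₂ x : K} (y₁ y₂ : K) (hx : x ∈ Icc x₁ x₂) :
    chord x₁ x₂ y₁ y₂ x ∈ segment K y₁ y₂ := by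
  have hwidth : 0 ≤ x₂ - x₁ := sub_nonneg.2 (hx.1.trans hx.2)
  rw [chord_eq_lineMap, segment_eq_image_lineMap]
  exact mem_image_of_mem _ ⟨div_nonneg (sub_nonneg.2 hx.1) hwidth,
    div_le_one_of_le₀ (sub_le_sub_right hx.2 x₁) hwidth⟩

lemma chord_sq_le_max {x₁ x₂ x : K} (y₁ y₂ : K) (hx : x ∈ Icc x₁ x₂) :
    chord x₁ x₂ y₁ y₂ x ^ 2 ≤ max (y₁ ^ 2) (y₂ ^ 2) :=
  even_two.convexOn_pow.le_max_of_mem_segment (mem_univ y₁) (mem_univ y₂)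
    (chord_mem_segment y₁ y₂ hx)

lemma sq_sub_sq_add_div_nonneg {b c d M γ : K} (a : K) (hd : 0 < d) (hb : b ^ 2 ≤ M)
    (hγ : c + M * d ≤ γ) : 0 ≤ a ^ 2 - b ^ 2 + (γ - c) / d := by
  have hslope : M ≤ (γ - c) / d := (le_div_iff₀ hd).2 (le_sub_iff_add_le'.2 hγ)
  linarith [sq_nonneg a]

theorem stmt10_general {x₁ x₂ : K} (y₁ y₂ : K) (hx₁₂ : x₁ < x₂) :
    ∃ γ₀ : K, 0 < γ₀ ∧ ∀ γ : K, γ₀ ≤ γ → ∀ x ∈ Icc x₁ x₂,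
      0 ≤ chord x₁ x₂ y₁ γ x ^ 2 - chord x₁ x₂ y₁ y₂ x ^ 2 + (γ - y₂) / (x₂ - x₁) := by
  refine ⟨max 1 (y₂ + max (y₁ ^ 2) (y₂ ^ 2) * (x₂ - x₁)), lt_max_of_lt_left one_pos, ?_⟩
  intro γ hγ x hx
  exact sq_sub_sq_add_div_nonneg _ (sub_pos.2 hx₁₂) (chord_sq_le_max y₁ y₂ hx)
    ((le_max_right _ _).trans hγ)

end OrderedField

/-- Lemma 6.3: for `γ` sufficiently large,
`b̃_X² - b̃_Y² + (b̃_X′ - b̃_Y′) ≥ 0` on `[x1, x2]`, where `b̃_X` is the line through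
`(x1,y1)` and `(x2,γ)`, `b̃_Y` the line through `(x1,y1)` and `(x2,y2)`, and
`b̃_X′ - b̃_Y′ = (γ - y2)/(x2 - x1)`. -/
theorem stmt10 (x1 x2 y1 y2 : ℝ)
    (hx1 : 0 < x1) (hx12 : x1 < x2) (hy12 : y1 < y2) (hy2 : y2 < 0) :
    ∃ γ0 : ℝ, 0 < γ0 ∧ ∀ γ : ℝ, γ0 ≤ γ → ∀ x ∈ Set.Icc x1 x2,
      0 ≤ ((γ - y1) / (x2 - x1) * (x - x1) + y1) ^ 2
          - ((y2 - y1) / (x2 - x1) * (x - x1) + y1) ^ 2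
          + (γ - y2) / (x2 - x1) :=
  stmt10_general y1 y2 hx12
end
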